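/- Bilinear estimate for τ(∂_x): let γ1 > 0, δ1 > 0 and γ be real constants. For every s ≥ 0 there is a constant C = C_s > 0 such that for all η ∈ H^s(ℝ), ‖τ(∂_x)(η²)‖_{H^s} ≤ C ‖η‖_{H^s}², where τ(∂_x) is the Fourier multiplier operator with symbol τ(ξ) = (3ξ − 4γξ³)/(4(1 + γ1ξ² + δ1ξ⁴)). -/

import Mathlib

noncomputable section
open MeasureTheory Real Set
open scoped FourierTransform

/-- Squared `Hˢ(ℝ)` norm, computed on the Fourier side.  With Mathlib's Fourier
transform `𝓕 f ξ = ∫ e^{-2πixξ} f x dx`, the classical frequency variable is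
`k = 2πξ` and `∫ (1+(2πξ)²)^s ‖𝓕 f ξ‖² dξ = ∫ (1+k²)^s |f̂(k)|² dk`, the classical
squared `Hˢ` norm. -/
def hNormSq (s : ℝ) (f : ℝ → ℂ) : ℝ :=
  ∫ ξ : ℝ, (1 + (2 * π * ξ) ^ 2) ^ s * ‖𝓕 f ξ‖ ^ 2

/-- The `Hˢ(ℝ)` norm. -/
def hNorm (s : ℝ) (f : ℝ → ℂ) : ℝ :=
  Real.sqrt (hNormSq s f)

/-- Membership in `Hˢ(ℝ)` (stated for integrable representatives, so that the
Fourier integral is the honest Fourier transform). -/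
def MemHs (s : ℝ) (f : ℝ → ℂ) : Prop :=
  Integrable f ∧ Integrable (fun ξ : ℝ => (1 + (2 * π * ξ) ^ 2) ^ s * ‖𝓕 f ξ‖ ^ 2)

/-- The `Hˢ` norm of `m(∂ₓ) g`, where `m : ℝ → ℂ` is a Fourier multiplier symbol in
the classical frequency variable `k = 2πξ`. -/
def multHNorm (s : ℝ) (m : ℝ → ℂ) (g : ℝ → ℂ) : ℝ :=
  Real.sqrt (∫ ξ : ℝ, (1 + (2 * π * ξ) ^ 2) ^ s * ‖m (2 * π * ξ) * 𝓕 g ξ‖ ^ 2)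

/-!
For `s ≥ 0`, an integrable `η` in `Hˢ` lies in `L¹ ∩ L²`, so Plancherel's theorem turns `𝓕 (η²)`
into the convolution `𝓕 η ⋆ 𝓕 η`. Peetre's inequality splits the weight `⟨k⟩ˢ = (1 + k²)^(s/2)`
over the two factors, and Cauchy–Schwarz then bounds `⟨k⟩ˢ |𝓕 (η²)|` *uniformly* by a multiple of
`‖η‖²_{Hˢ}`. Multiplying by any symbol in `L²` therefore lands in `Hˢ`, and `τ` is such a symbol:
it is a rational function without real poles that vanishes at infinity.
-/

open scoped InnerProductSpace SchwartzMap ComplexConjugate Convolution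

section Plancherel

variable {V E : Type*} [NormedAddCommGroup V] [InnerProductSpace ℝ V]
  [FiniteDimensional ℝ V] [MeasurableSpace V] [BorelSpace V] [NormedAddCommGroup E]

theorem continuous_fourier_of_integrable [NormedSpace ℂ E] {f : V → E} (hf : Integrable f) :
    Continuous (𝓕 f) :=
  VectorFourier.fourierIntegral_continuous continuous_fourierChar (L := innerₗ V)
    continuous_inner hf

theorem ae_eq_of_integral_schwartz_smul_eq [NormedSpace ℂ E] [CompleteSpace E] {μ : Measure V}
    {f g : V → E} (hf : LocallyIntegrable f μ) (hg : LocallyIntegrable g μ)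
    (h : ∀ φ : 𝓢(V, ℂ), ∫ x, φ x • f x ∂μ = ∫ x, φ x • g x ∂μ) : f =ᵐ[μ] g := by
  refine ae_eq_of_integral_contDiff_smul_eq hf hg fun φ hφ hφ_supp => ?_
  have hsupp : HasCompactSupport (Complex.ofRealCLM ∘ φ) := hφ_supp.comp_left rfl
  simpa using h (hsupp.toSchwartzMap (Complex.ofRealCLM.contDiff.comp hφ))

theorem integral_fourier_schwartz_smul_eq [NormedSpace ℂ E] [CompleteSpace E] {f : V → E}
    (hf : Integrable f) (φ : 𝓢(V, ℂ)) : ∫ x, 𝓕 φ x • f x = ∫ ξ, φ ξ • 𝓕 f ξ := by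
  have h := VectorFourier.integral_fourierIntegral_smul_eq_flip (L := innerₗ V)
    continuous_fourierChar continuous_inner (φ.integrable (μ := volume)) hf
  rwa [flip_innerₗ] at h

variable [InnerProductSpace ℂ E] [CompleteSpace E]

theorem integral_fourier_schwartz_smul_Lp_eq (g : Lp (α := V) E 2) (φ : 𝓢(V, ℂ)) :
    ∫ x, 𝓕 φ x • g x = ∫ ξ, φ ξ • (𝓕 g : Lp (α := V) E 2) ξ := by
  simpa using congr($(Lp.fourier_toTemperedDistribution_eq g) φ)

theorem fourier_ae_eq_fourier_Lp_iff {f : V → E} (hf : Integrable f) (g : Lp (α := V) E 2) :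
    𝓕 f =ᵐ[volume] (𝓕 g : Lp (α := V) E 2) ↔ f =ᵐ[volume] g := by
  have hloc (u : Lp (α := V) E 2) : LocallyIntegrable u :=
    (Lp.memLp u).locallyIntegrable one_le_two
  constructor <;> intro h
  · refine ae_eq_of_integral_schwartz_smul_eq hf.locallyIntegrable (hloc g) fun φ => ?_
    rw [← FourierTransform.fourier_fourierInv_eq (F := 𝓢(V, ℂ)) φ,
      integral_fourier_schwartz_smul_eq hf, integral_fourier_schwartz_smul_Lp_eq]
    exact integral_congr_ae (h.mono fun ξ hξ => congrArg _ hξ)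
  · refine ae_eq_of_integral_schwartz_smul_eq
      (continuous_fourier_of_integrable hf).locallyIntegrable (hloc _) fun φ => ?_
    rw [← integral_fourier_schwartz_smul_eq hf, ← integral_fourier_schwartz_smul_Lp_eq]
    exact integral_congr_ae (h.mono fun x hx => congrArg _ hx)

theorem fourier_ae_eq_fourier_toLp {f : V → E} (hf : Integrable f) (hf₂ : MemLp f 2) :
    𝓕 f =ᵐ[volume] (𝓕 (hf₂.toLp f) : Lp (α := V) E 2) :=
  (fourier_ae_eq_fourier_Lp_iff hf _).2 hf₂.coeFn_toLp.symm

theorem memLp_two_of_memLp_two_fourier {f : V → E} (hf : Integrable f) (hf₂ : MemLp (𝓕 f) 2) :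
    MemLp f 2 := by
  have h : 𝓕 f =ᵐ[volume] (𝓕 (𝓕⁻ (hf₂.toLp (𝓕 f) : Lp (α := V) E 2)) : Lp (α := V) E 2) := by
    rw [FourierTransform.fourier_fourierInv_eq]
    exact hf₂.coeFn_toLp.symm
  exact (Lp.memLp _).ae_eq ((fourier_ae_eq_fourier_Lp_iff hf _).1 h).symm

theorem integral_inner_fourier_eq {f g : V → E} (hf : Integrable f) (hf₂ : MemLp f 2)
    (hg : Integrable g) (hg₂ : MemLp g 2) :
    ∫ ξ, ⟪𝓕 f ξ, 𝓕 g ξ⟫_ℂ = ∫ x, ⟪f x, g x⟫_ℂ := by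
  calc ∫ ξ, ⟪𝓕 f ξ, 𝓕 g ξ⟫_ℂ
      = ⟪𝓕 (hf₂.toLp f), 𝓕 (hg₂.toLp g)⟫_ℂ := by
        rw [L2.inner_def]
        exact integral_congr_ae ((fourier_ae_eq_fourier_toLp hf hf₂).comp₂ _
          (fourier_ae_eq_fourier_toLp hg hg₂))
    _ = ⟪hf₂.toLp f, hg₂.toLp g⟫_ℂ := Lp.inner_fourier_eq _ _
    _ = ∫ x, ⟪f x, g x⟫_ℂ := by
        rw [L2.inner_def]
        exact integral_congr_ae (hf₂.coeFn_toLp.comp₂ _ hg₂.coeFn_toLp)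

theorem fourier_conj_fourierChar_mul (f : V → ℂ) (ξ ζ : V) :
    𝓕 (fun x => conj (𝐞 (-⟪x, ξ⟫_ℝ) * f x)) ζ = conj (𝓕 f (ξ - ζ)) := by
  simp only [fourier_eq, ← integral_conj, Circle.smul_def, smul_eq_mul, map_mul,
    ← Circle.coe_inv_eq_conj, ← AddChar.map_neg_eq_inv, ← mul_assoc, ← Circle.coe_mul,
    ← AddChar.map_add_eq_mul, inner_sub_right]
  congr! 5
  ring_nf

theorem fourier_mul_eq_convolution {f g : V → ℂ} (hf : Integrable f) (hf₂ : MemLp f 2)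
    (hg : Integrable g) (hg₂ : MemLp g 2) (ξ : V) :
    𝓕 (fun x => f x * g x) ξ = (𝓕 f ⋆[ContinuousLinearMap.mul ℂ ℂ] 𝓕 g) ξ := by
  set h : V → ℂ := fun x => conj (𝐞 (-⟪x, ξ⟫_ℝ) * g x)
  have hnorm (x : V) : ‖h x‖ = ‖g x‖ := by
    simp only [h, RCLike.norm_conj, norm_mul, Circle.norm_coe, one_mul]
  have hmeas : AEStronglyMeasurable h :=
    Complex.continuous_conj.comp_aestronglyMeasurable <|
      (Continuous.aestronglyMeasurable (by fun_prop)).mul hg.aestronglyMeasurable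
  have hh : Integrable h := hg.congr' hmeas (ae_of_all _ fun x => (hnorm x).symm)
  have hh₂ : MemLp h 2 := hg₂.of_le hmeas (ae_of_all _ fun x => (hnorm x).le)
  calc 𝓕 (fun x => f x * g x) ξ
      = ∫ x, ⟪h x, f x⟫_ℂ := by
        rw [fourier_eq]
        congr! 2 with x
        simp only [h, Circle.smul_def, smul_eq_mul, RCLike.inner_apply, RCLike.conj_conj]
        ring
    _ = ∫ ζ, ⟪𝓕 h ζ, 𝓕 f ζ⟫_ℂ := (integral_inner_fourier_eq hh hh₂ hf hf₂).symm
    _ = (𝓕 f ⋆[ContinuousLinearMap.mul ℂ ℂ] 𝓕 g) ξ := by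
        simp only [h, fourier_conj_fourierChar_mul, RCLike.inner_apply, RCLike.conj_conj,
          convolution_def, ContinuousLinearMap.mul_apply']

end Plancherel

theorem integral_mul_le_sqrt_mul_sqrt {α : Type*} [MeasurableSpace α] {μ : Measure α}
    {u v : α → ℝ} (hu : MemLp u 2 μ) (hv : MemLp v 2 μ) :
    ∫ x, u x * v x ∂μ ≤ √(∫ x, u x ^ 2 ∂μ) * √(∫ x, v x ^ 2 ∂μ) := by
  have hholder := integral_mul_norm_le_Lp_mul_Lq Real.HolderConjugate.two_two
    (by simpa using hu) (by simpa using hv)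
  simp only [rpow_two, ← sqrt_eq_rpow, norm_eq_abs, sq_abs, ← abs_mul] at hholder
  exact (le_abs_self _).trans (abs_integral_le_integral_abs.trans hholder)

theorem one_add_norm_add_sq_rpow_le {G : Type*} [SeminormedAddCommGroup G] {s : ℝ} (hs : 0 ≤ s)
    (a b : G) : (1 + ‖a + b‖ ^ 2) ^ s ≤ 2 ^ s * ((1 + ‖a‖ ^ 2) ^ s * (1 + ‖b‖ ^ 2) ^ s) := by
  rw [← mul_rpow (by positivity) (by positivity), ← mul_rpow (by positivity) (by positivity)]
  refine rpow_le_rpow (by positivity) ?_ hs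
  have htri : ‖a + b‖ ^ 2 ≤ (‖a‖ + ‖b‖) ^ 2 := by gcongr; exact norm_add_le a b
  nlinarith [sq_nonneg (‖a‖ - ‖b‖), sq_nonneg (‖a‖ * ‖b‖)]

section Sobolev

/-- The weighted spectral amplitude `⟨k⟩ˢ |f̂(k)|` at frequency `k = 2πξ`, whose `L²` norm in `ξ`
is the `Hˢ` norm of `f`. -/
def sobolevAmplitude (s : ℝ) (f : ℝ → ℂ) (ξ : ℝ) : ℝ :=
  (1 + (2 * π * ξ) ^ 2) ^ (s / 2) * ‖𝓕 f ξ‖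

variable {s : ℝ} {f g : ℝ → ℂ}

theorem sobolevAmplitude_nonneg (s : ℝ) (f : ℝ → ℂ) (ξ : ℝ) : 0 ≤ sobolevAmplitude s f ξ := by
  unfold sobolevAmplitude
  positivity

theorem sobolevAmplitude_sq (s : ℝ) (f : ℝ → ℂ) (ξ : ℝ) :
    sobolevAmplitude s f ξ ^ 2 = (1 + (2 * π * ξ) ^ 2) ^ s * ‖𝓕 f ξ‖ ^ 2 := by
  rw [sobolevAmplitude, mul_pow, ← rpow_mul_natCast (by positivity), Nat.cast_ofNat,
    div_mul_cancel₀ s two_ne_zero]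

theorem hNorm_eq_sqrt_integral (s : ℝ) (f : ℝ → ℂ) :
    hNorm s f = √(∫ ξ, sobolevAmplitude s f ξ ^ 2) := by
  simp only [hNorm, hNormSq, sobolevAmplitude_sq]

theorem norm_fourier_le_sobolevAmplitude (hs : 0 ≤ s) (f : ℝ → ℂ) (ξ : ℝ) :
    ‖𝓕 f ξ‖ ≤ sobolevAmplitude s f ξ :=
  le_mul_of_one_le_left (norm_nonneg _)
    (one_le_rpow (le_add_of_nonneg_right (sq_nonneg _)) (by positivity))

theorem MemHs.memLp_sobolevAmplitude (hf : MemHs s f) : MemLp (sobolevAmplitude s f) 2 := by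
  have hmeas : AEStronglyMeasurable (sobolevAmplitude s f) := by
    have hcont := continuous_fourier_of_integrable hf.1
    exact (Measurable.aestronglyMeasurable (by fun_prop)).mul hcont.norm.aestronglyMeasurable
  rw [memLp_two_iff_integrable_sq hmeas]
  simpa only [sobolevAmplitude_sq] using hf.2

theorem MemHs.memLp_two (hs : 0 ≤ s) (hf : MemHs s f) : MemLp f 2 :=
  memLp_two_of_memLp_two_fourier hf.1 <|
    hf.memLp_sobolevAmplitude.mono' (continuous_fourier_of_integrable hf.1).aestronglyMeasurable
      (ae_of_all _ (norm_fourier_le_sobolevAmplitude hs f))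

theorem weight_mul_norm_fourier_mul_fourier_le (hs : 0 ≤ s) (f g : ℝ → ℂ) (ξ ζ : ℝ) :
    (1 + (2 * π * ξ) ^ 2) ^ (s / 2) * ‖𝓕 f ζ * 𝓕 g (ξ - ζ)‖ ≤
      2 ^ (s / 2) * (sobolevAmplitude s f ζ * sobolevAmplitude s g (ξ - ζ)) := by
  have hpeetre := one_add_norm_add_sq_rpow_le (div_nonneg hs zero_le_two)
    (2 * π * ζ) (2 * π * (ξ - ζ))
  rw [← mul_add, add_sub_cancel] at hpeetre
  simp only [norm_eq_abs, sq_abs] at hpeetre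
  grw [hpeetre, norm_mul]
  unfold sobolevAmplitude
  exact le_of_eq (by ring)

theorem sobolevAmplitude_mul_le (hs : 0 ≤ s) (hf : MemHs s f) (hg : MemHs s g) (ξ : ℝ) :
    sobolevAmplitude s (fun x => f x * g x) ξ ≤ 2 ^ (s / 2) * (hNorm s f * hNorm s g) := by
  set w : ℝ := (1 + (2 * π * ξ) ^ 2) ^ (s / 2)
  have hf₂ := hf.memLp_sobolevAmplitude
  have hg₂ : MemLp (fun ζ => sobolevAmplitude s g (ξ - ζ)) 2 :=
    hg.memLp_sobolevAmplitude.comp_measurePreserving (volume.measurePreserving_sub_left ξ)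
  calc sobolevAmplitude s (fun x => f x * g x) ξ
      = w * ‖∫ ζ, 𝓕 f ζ * 𝓕 g (ξ - ζ)‖ := by
        rw [sobolevAmplitude,
          fourier_mul_eq_convolution hf.1 (hf.memLp_two hs) hg.1 (hg.memLp_two hs)]
        rfl
    _ ≤ ∫ ζ, w * ‖𝓕 f ζ * 𝓕 g (ξ - ζ)‖ := by
        rw [integral_const_mul]
        gcongr
        exact norm_integral_le_integral_norm _
    _ ≤ ∫ ζ, 2 ^ (s / 2) * (sobolevAmplitude s f ζ * sobolevAmplitude s g (ξ - ζ)) :=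
        integral_mono_of_nonneg (ae_of_all _ fun ζ => by positivity)
          ((hf₂.integrable_mul hg₂).const_mul _)
          (ae_of_all _ (weight_mul_norm_fourier_mul_fourier_le hs f g ξ))
    _ ≤ 2 ^ (s / 2) * (hNorm s f * hNorm s g) := by
        rw [integral_const_mul, hNorm_eq_sqrt_integral, hNorm_eq_sqrt_integral,
          ← integral_sub_left_eq_self (fun ζ => sobolevAmplitude s g ζ ^ 2) volume ξ]
        gcongr
        exact integral_mul_le_sqrt_mul_sqrt hf₂ hg₂

theorem multHNorm_le_of_sobolevAmplitude_le {m : ℝ → ℂ} (hm : MemLp m 2) {B : ℝ}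
    (hB : ∀ ξ, sobolevAmplitude s g ξ ≤ B) :
    multHNorm s m g ≤ √((2 * π)⁻¹ * ∫ k, ‖m k‖ ^ 2) * B := by
  have hB₀ : 0 ≤ B := (sobolevAmplitude_nonneg s g 0).trans (hB 0)
  have hm_int : Integrable fun ξ => ‖m (2 * π * ξ)‖ ^ 2 :=
    hm.integrable_norm_pow two_ne_zero |>.comp_mul_left' two_pi_pos.ne'
  have hchange : ∫ ξ, ‖m (2 * π * ξ)‖ ^ 2 = (2 * π)⁻¹ * ∫ k, ‖m k‖ ^ 2 := by
    rw [Measure.integral_comp_mul_left (fun k => ‖m k‖ ^ 2), abs_of_pos (by positivity),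
      smul_eq_mul]
  rw [multHNorm, ← hchange, ← sqrt_sq hB₀, ← sqrt_mul (by positivity), ← integral_mul_const]
  refine sqrt_le_sqrt <| integral_mono_of_nonneg (ae_of_all _ fun ξ => by positivity)
    (hm_int.mul_const _) (ae_of_all _ fun ξ => ?_)
  calc (1 + (2 * π * ξ) ^ 2) ^ s * ‖m (2 * π * ξ) * 𝓕 g ξ‖ ^ 2
      = ‖m (2 * π * ξ)‖ ^ 2 * sobolevAmplitude s g ξ ^ 2 := by
        rw [sobolevAmplitude_sq, norm_mul]
        ring
    _ ≤ ‖m (2 * π * ξ)‖ ^ 2 * B ^ 2 := by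
        gcongr
        exacts [sobolevAmplitude_nonneg s g ξ, hB ξ]

theorem multHNorm_mul_le {m : ℝ → ℂ} (hm : MemLp m 2) (hs : 0 ≤ s) (hf : MemHs s f)
    (hg : MemHs s g) :
    multHNorm s m (fun x => f x * g x) ≤
      √((2 * π)⁻¹ * ∫ k, ‖m k‖ ^ 2) * (2 ^ (s / 2) * (hNorm s f * hNorm s g)) :=
  multHNorm_le_of_sobolevAmplitude_le hm (sobolevAmplitude_mul_le hs hf hg)

theorem exists_multHNorm_mul_le {m : ℝ → ℂ} (hm : MemLp m 2) (hs : 0 ≤ s) :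
    ∃ C > 0, ∀ f g : ℝ → ℂ, MemHs s f → MemHs s g →
      multHNorm s m (fun x => f x * g x) ≤ C * (hNorm s f * hNorm s g) := by
  refine ⟨√((2 * π)⁻¹ * ∫ k, ‖m k‖ ^ 2) * 2 ^ (s / 2) + 1, by positivity, fun f g hf hg => ?_⟩
  have hfg : 0 ≤ hNorm s f * hNorm s g := mul_nonneg (sqrt_nonneg _) (sqrt_nonneg _)
  grw [multHNorm_mul_le hm hs hf hg, ← mul_assoc, ← le_add_of_nonneg_right zero_le_one]

end Sobolev

section RationalSymbols

open Polynomial Asymptotics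

theorem isBigO_sq_eval_div_eval {p q : ℝ[X]} (hq : ∀ x, q.eval x ≠ 0) (hdeg : p.degree < q.degree) :
    (fun x => (p.eval x / q.eval x) ^ 2) =O[Filter.cocompact ℝ] fun x => (1 + x ^ 2)⁻¹ := by
  have hpX_degree : (p * X).degree ≤ q.degree := by
    rw [degree_mul_X]
    exact Nat.WithBot.add_one_le_of_lt hdeg
  have hpX : (fun x => p.eval x * x) =O[Filter.cocompact ℝ] fun x => q.eval x := by
    simpa [Metric.cobounded_eq_cocompact] using isBigO_cobounded_of_degree_le hpX_degree
  have hp : (fun x => p.eval x) =O[Filter.cocompact ℝ] fun x => q.eval x := by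
    simpa only [Metric.cobounded_eq_cocompact] using isBigO_cobounded_of_degree_le hdeg.le
  have hsum := ((hp.pow 2).add (hpX.pow 2)).mul
    (isBigO_refl (fun x => (q.eval x ^ 2 * (1 + x ^ 2))⁻¹) (Filter.cocompact ℝ))
  refine hsum.congr (fun x => ?_) fun x => ?_
  · have hx : 1 + x ^ 2 ≠ 0 := by positivity
    field_simp [hq x]
  · field_simp [hq x]

theorem memLp_two_eval_div_eval {p q : ℝ[X]} (hq : ∀ x, q.eval x ≠ 0)
    (hdeg : p.degree < q.degree) : MemLp (fun x => p.eval x / q.eval x) 2 := by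
  have hcont : Continuous fun x => p.eval x / q.eval x := p.continuous.div q.continuous hq
  rw [memLp_two_iff_integrable_sq hcont.aestronglyMeasurable]
  exact (hcont.pow 2).locallyIntegrable.integrable_of_isBigO_cocompact
    (isBigO_sq_eval_div_eval hq hdeg) (integrable_inv_one_add_sq.integrableAtFilter _)

/-- The symbol `τ` of the multiplier `τ(∂ₓ)`, as a real function of the classical frequency `k`. -/
def tauSymbol (γ1 δ1 γ k : ℝ) : ℝ :=
  (3 * k - 4 * γ * k ^ 3) / (4 * (1 + γ1 * k ^ 2 + δ1 * k ^ 4))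

theorem memLp_two_tauSymbol {γ1 δ1 : ℝ} (γ : ℝ) (hδ1 : δ1 ≠ 0)
    (hden : ∀ k : ℝ, 1 + γ1 * k ^ 2 + δ1 * k ^ 4 ≠ 0) : MemLp (tauSymbol γ1 δ1 γ) 2 := by
  have hp : (C 3 * X - C (4 * γ) * X ^ 3).degree ≤ 3 := by compute_degree
  have hq : (C 4 * (1 + C γ1 * X ^ 2 + C δ1 * X ^ 4)).degree = 4 := by compute_degree!
  have hdeg : (C 3 * X - C (4 * γ) * X ^ 3).degree <
      (C 4 * (1 + C γ1 * X ^ 2 + C δ1 * X ^ 4)).degree :=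
    hq ▸ hp.trans_lt (by norm_num)
  have hmem := memLp_two_eval_div_eval (by simpa using hden) hdeg
  simpa [tauSymbol] using! hmem

end RationalSymbols

theorem tau_bilinear_estimate_general {γ1 δ1 : ℝ} (γ : ℝ) (hδ1 : δ1 ≠ 0)
    (hden : ∀ k : ℝ, 1 + γ1 * k ^ 2 + δ1 * k ^ 4 ≠ 0) {s : ℝ} (hs : 0 ≤ s) :
    ∃ C > 0, ∀ f g : ℝ → ℂ, MemHs s f → MemHs s g →
      multHNorm s (fun k : ℝ => (tauSymbol γ1 δ1 γ k : ℂ)) (fun x => f x * g x) ≤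
        C * (hNorm s f * hNorm s g) :=
  exists_multHNorm_mul_le (memLp_two_tauSymbol γ hδ1 hden).ofReal hs

/-- **Bilinear estimate for τ(∂ₓ)** (Corollary 2.4): for `γ1, δ1 > 0`, `γ ∈ ℝ` and
every `s ≥ 0` there is `C = C_s > 0` with `‖τ(∂ₓ)(η²)‖_{Hˢ} ≤ C ‖η‖_{Hˢ}²`, where
`τ(k) = (3k − 4γk³)/(4(1 + γ1k² + δ1k⁴))`. -/
theorem tau_bilinear_estimate (γ1 δ1 γ : ℝ) (hγ1 : 0 < γ1) (hδ1 : 0 < δ1)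
    (s : ℝ) (hs : 0 ≤ s) :
    ∃ C > 0, ∀ η : ℝ → ℂ, MemHs s η →
      multHNorm s
        (fun k : ℝ => (((3 * k - 4 * γ * k ^ 3) / (4 * (1 + γ1 * k ^ 2 + δ1 * k ^ 4)) : ℝ) : ℂ))
        (fun x => η x ^ 2) ≤ C * hNorm s η ^ 2 := by
  obtain ⟨C, hC, h⟩ := tau_bilinear_estimate_general γ hδ1.ne' (fun k => by positivity) hs
  exact ⟨C, hC, fun η hη => by simpa only [tauSymbol, sq] using h η η hη hη⟩
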